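/- Elliptic binomial theorem: for every integer k ≥ 0, all α, β, γ ∈ ℂ such that every bracket appearing in a denominator of C_n^k(α,β,γ) (n = 0,…,k) is nonzero, and every z ∈ ℂ, one has [α+rz]_k [α−rz]_k = Σ_{n=0}^{k} C_n^k(α,β,γ) · [β+rz]_n [β−rz]_n [γ+rz]_{k−n} [γ−rz]_{k−n}. -/

import Mathlib

noncomputable section

open Complex Finset

namespace Ell

/-- `x^s = exp(-iπ s /(r τ))`. -/
def xp (τ : ℂ) (r : ℝ) (s : ℂ) : ℂ :=
  Complex.exp (-Complex.I * (Real.pi : ℂ) * s / ((r : ℂ) * τ))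

/-- `Θ_p(z) = ∏_{j ≥ 0} (1 - z p^j)(1 - p^{j+1}/z)(1 - p^{j+1})`. -/
def Theta (p z : ℂ) : ℂ :=
  ∏' j : ℕ, ((1 - z * p ^ j) * (1 - p ^ (j + 1) / z) * (1 - p ^ (j + 1)))

/-- The bracket `[u] = x^{u²/r - u} Θ_p(x^{2u})` with `p = x^{2r}`. -/
def br (τ : ℂ) (r : ℝ) (u : ℂ) : ℂ :=
  xp τ r (u ^ 2 / (r : ℂ) - u) * Theta (xp τ r (2 * (r : ℂ))) (xp τ r (2 * u))

/-- Elliptic shifted factorial `[u]_n = ∏_{j=0}^{n-1} [u+j]`. -/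
def brF (τ : ℂ) (r : ℝ) (u : ℂ) (n : ℕ) : ℂ :=
  ∏ j ∈ Finset.range n, br τ r (u + (j : ℂ))

/-- Elliptic binomial coefficient `C_n^k(α,β,γ)`. -/
def Cnk (τ : ℂ) (r : ℝ) (k n : ℕ) (α β γ : ℂ) : ℂ :=
  brF τ r 1 k / (brF τ r 1 n * brF τ r 1 (k - n)) *
    (brF τ r (α - γ) n * brF τ r (α + γ + (k : ℂ) - (n : ℂ)) n *
      brF τ r (α - β) (k - n) * brF τ r (α + β + (n : ℂ)) (k - n)) /
    (brF τ r (β - γ + (n : ℂ) - (k : ℂ)) n * brF τ r (γ - β - (n : ℂ)) (k - n) *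
      brF τ r (β + γ) k)

/-- The elliptic 6j-symbol `R_n^m(α,β,γ,δ;k)`. -/
def Rnm (τ : ℂ) (r : ℝ) (k n m : ℕ) (α β γ δ : ℂ) : ℂ :=
  ∑ j ∈ Finset.range (min n m + 1),
    Cnk τ r n j α γ (β + (k : ℂ) - (n : ℂ)) * Cnk τ r (k - j) (m - j) β (γ + (j : ℂ)) δ

/-- Terminating very-well-poised elliptic hypergeometric sum with explicit
truncation `N`:  `Σ_{j=0}^N ([u₀+2j]/[u₀]) ([u₀]_j/[1]_j) ∏ᵢ [uᵢ]_j/[u₀+1-uᵢ]_j`. -/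
def Vsum (τ : ℂ) (r : ℝ) (u₀ : ℂ) (us : List ℂ) (N : ℕ) : ℂ :=
  ∑ j ∈ Finset.range (N + 1),
    br τ r (u₀ + 2 * (j : ℂ)) / br τ r u₀ * (brF τ r u₀ j / brF τ r 1 j) *
      (us.map fun ui => brF τ r ui j / brF τ r (u₀ + 1 - ui) j).prod

/-- "Every bracket appearing in a denominator of `C_n^k(·,β,γ)` is nonzero". -/
def CdenomNZ (τ : ℂ) (r : ℝ) (k n : ℕ) (β γ : ℂ) : Prop :=
  brF τ r 1 n ≠ 0 ∧ brF τ r 1 (k - n) ≠ 0 ∧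
    brF τ r (β - γ + (n : ℂ) - (k : ℂ)) n ≠ 0 ∧
    brF τ r (γ - β - (n : ℂ)) (k - n) ≠ 0 ∧ brF τ r (β + γ) k ≠ 0

/-- "Every bracket appearing in a denominator of `R_n^m(α,β,γ,δ;k)` is nonzero". -/
def RdenomNZ (τ : ℂ) (r : ℝ) (k n m : ℕ) (β γ δ : ℂ) : Prop :=
  ∀ j ≤ min n m,
    CdenomNZ τ r n j γ (β + (k : ℂ) - (n : ℂ)) ∧
      CdenomNZ τ r (k - j) (m - j) (γ + (j : ℂ)) δ

/-- Jacobi theta `ϑ₁(v|σ)`. -/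
def th1 (v σ : ℂ) : ℂ :=
  2 * Complex.exp (2 * (Real.pi : ℂ) * Complex.I * σ / 8) *
    (∏' n : ℕ, (1 - Complex.exp (2 * (Real.pi : ℂ) * Complex.I * σ) ^ (n + 1))) *
    Complex.sin ((Real.pi : ℂ) * v) *
    ∏' n : ℕ,
      (1 - 2 * Complex.exp (2 * (Real.pi : ℂ) * Complex.I * σ) ^ (n + 1) *
            Complex.cos (2 * (Real.pi : ℂ) * v) +
        Complex.exp (2 * (Real.pi : ℂ) * Complex.I * σ) ^ (2 * (n + 1)))

/-- Jacobi theta `ϑ₀(v|σ)`. -/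
def th0 (v σ : ℂ) : ℂ :=
  -Complex.I * Complex.exp ((Real.pi : ℂ) * Complex.I * (v + σ / 4)) * th1 (v + σ / 2) σ

/-- Jacobi theta `ϑ₂(v|σ)`. -/
def th2 (v σ : ℂ) : ℂ := th1 (v + 1 / 2) σ

/-- Jacobi theta `ϑ₃(v|σ)`. -/
def th3 (v σ : ℂ) : ℂ :=
  Complex.exp ((Real.pi : ℂ) * Complex.I * (v + σ / 4)) * th1 (v + (σ + 1) / 2) σ

/-- Intertwining vector component `ψ_ε(u)^a_b`, `ε ∈ {1, -1}`. -/
def psi (τ : ℂ) (r : ℝ) (u : ℂ) (ε : ℤ) (a b : ℤ) : ℂ :=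
  if ε = 1 then th0 ((((a : ℂ) - (b : ℂ)) * u + (a : ℂ)) / (2 * (r : ℂ))) (τ / 2)
  else th3 ((((a : ℂ) - (b : ℂ)) * u + (a : ℂ)) / (2 * (r : ℂ))) (τ / 2)

/-- The constant `C = x^{-r/4} e^{-iπ/4} τ^{1/2}`. -/
def Cc (τ : ℂ) (r : ℝ) : ℂ :=
  xp τ r (-(r : ℂ) / 4) * Complex.exp (-(Real.pi : ℂ) * Complex.I / 4) * τ ^ (1 / 2 : ℂ)

/-- Dual intertwining vector component `ψ*_ε(u)^a_b = -ε(a-b) C² ψ_{-ε}(u-1)^a_b/(2[b][u])`. -/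
def psiStar (τ : ℂ) (r : ℝ) (u : ℂ) (ε : ℤ) (a b : ℤ) : ℂ :=
  -(ε : ℂ) * ((a : ℂ) - (b : ℂ)) * Cc τ r ^ 2 * psi τ r (u - 1) (-ε) a b /
    (2 * br τ r (b : ℂ) * br τ r u)

/-- Sign attached to a boolean. -/
def sg (b : Bool) : ℤ := if b then 1 else -1

/-- Canonical path from `a`: up for `j ≤ n`, down afterwards. -/
def cpathZ (a n : ℤ) (j : ℕ) : ℤ := if (j : ℤ) ≤ n then a + j else a + 2 * n - j

/-- Admissibility: `a - b ∈ {-k, -k+2, …, k}`. -/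
def adm (k : ℕ) (a b : ℤ) : Prop := (a - b).natAbs ≤ k ∧ (a - b - (k : ℤ)) % 2 = 0

instance (k : ℕ) (a b : ℤ) : Decidable (adm k a b) := by unfold adm; infer_instance

/-- Fused intertwining vector component `ψ^{(k)}_μ(u)^a_b` (zero if `a,b` not admissible). -/
def psiF (τ : ℂ) (r : ℝ) (k : ℕ) (μ : ℤ) (u : ℂ) (a b : ℤ) : ℂ :=
  if adm k a b then
    ∑ ε ∈ Finset.univ.filter fun ε : Fin k → Bool => (∑ j, sg (ε j)) = μ,
      ∏ j : Fin k,
        psi τ r (u + (k : ℂ) - (((j : ℕ) + 1 : ℕ) : ℂ)) (sg (ε j))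
          (cpathZ a (((k : ℤ) - (a - b)) / 2) (j : ℕ))
          (cpathZ a (((k : ℤ) - (a - b)) / 2) ((j : ℕ) + 1))
  else 0

/-- Partial-sum path attached to a sign sequence `δ`, starting at `a`. -/
def spath (k : ℕ) (a : ℤ) (δ : Fin k → Bool) (j : ℕ) : ℤ :=
  a + ∑ i ∈ Finset.range j, if h : i < k then sg (δ ⟨i, h⟩) else 0

/-- Fused dual intertwining vector component `ψ*^{(k)}_μ(u)^b_a`
(sum over all admissible paths from `a` to `b`; zero if not admissible). -/
def psiStarF (τ : ℂ) (r : ℝ) (k : ℕ) (μ : ℤ) (u : ℂ) (b a : ℤ) : ℂ :=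
  if adm k a b then
    ∑ δ ∈ Finset.univ.filter fun δ : Fin k → Bool => (∑ j, sg (δ j)) = b - a,
      ∏ j : Fin k,
        psiStar τ r (u + (k : ℂ) - (((j : ℕ) + 1 : ℕ) : ℂ))
          (if ((j : ℕ) + 1 : ℤ) ≤ ((k : ℤ) + μ) / 2 then 1 else -1)
          (spath k a δ ((j : ℕ) + 1)) (spath k a δ (j : ℕ))
  else 0

/-- The `L`-matrix `L^{(k)}(a,b;c,d|u) = Σ_μ ψ*^{(k)}_μ(u)^d_c ψ^{(k)}_μ(u)^a_b`. -/
def Lk (τ : ℂ) (r : ℝ) (k : ℕ) (u : ℂ) (a b c d : ℤ) : ℂ :=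
  ∑ i ∈ Finset.range (k + 1),
    psiStarF τ r k ((k : ℤ) - 2 * (i : ℤ)) u d c * psiF τ r k ((k : ℤ) - 2 * (i : ℤ)) u a b

/-- Normalized face weight `W̄(a,b;d,c|u)` (arguments ordered (NW, NE; SW, SE)). -/
def Wb (τ : ℂ) (r : ℝ) (u : ℂ) (a b d c : ℤ) : ℂ :=
  if b = a + 1 ∧ d = a + 1 ∧ c = a + 2 then 1
  else if b = a - 1 ∧ d = a - 1 ∧ c = a - 2 then 1
  else if b = a + 1 ∧ d = a + 1 ∧ c = a then
    br τ r ((a : ℂ) - u) * br τ r 1 / (br τ r (a : ℂ) * br τ r (1 + u))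
  else if b = a - 1 ∧ d = a - 1 ∧ c = a then
    br τ r ((a : ℂ) + u) * br τ r 1 / (br τ r (a : ℂ) * br τ r (1 + u))
  else if b = a + 1 ∧ d = a - 1 ∧ c = a then
    br τ r ((a : ℂ) + 1) * br τ r u / (br τ r (a : ℂ) * br τ r (1 + u))
  else if b = a - 1 ∧ d = a + 1 ∧ c = a then
    br τ r ((a : ℂ) - 1) * br τ r u / (br τ r (a : ℂ) * br τ r (1 + u))
  else 0

/-- Sequence with prescribed endpoints `d`, `c` and free interior values `f`. -/
def seqI (k : ℕ) (d c : ℤ) (f : Fin (k - 1) → ℤ) (j : ℕ) : ℤ :=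
  if h0 : j = 0 then d
  else if hj : j < k then f ⟨j - 1, by omega⟩ else c

/-- Fused face weight `W^{(k,1)}(a,b;d,c|u)`. -/
def Wk1 (τ : ℂ) (r : ℝ) (k : ℕ) (u : ℂ) (a b d c : ℤ) : ℂ :=
  if adm k a b then
    ∑' f : Fin (k - 1) → ℤ,
      ∏ j ∈ Finset.range k,
        Wb τ r (u + (k : ℂ) - ((j : ℂ) + 1))
          (cpathZ a (((k : ℤ) - (a - b)) / 2) j)
          (cpathZ a (((k : ℤ) - (a - b)) / 2) (j + 1))
          (seqI k d c f j) (seqI k d c f (j + 1))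
  else 0

/-- Fused face weight `W^{(k,l)}(a,b;d,c|u)`. -/
def Wkl (τ : ℂ) (r : ℝ) (k l : ℕ) (u : ℂ) (a b d c : ℤ) : ℂ :=
  if adm l b c then
    ∑' g : Fin (l - 1) → ℤ,
      ∏ i ∈ Finset.range l,
        Wk1 τ r k (u - (l : ℂ) + ((i : ℂ) + 1))
          (seqI l a d g i) (cpathZ b (((l : ℤ) - (b - c)) / 2) i)
          (seqI l a d g (i + 1)) (cpathZ b (((l : ℤ) - (b - c)) / 2) (i + 1))
  else 0

/-- Eight-vertex weight `ā(u)`. -/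
def aw (τ : ℂ) (r : ℝ) (u : ℂ) : ℂ :=
  th2 (1 / (2 * (r : ℂ))) (τ / 2) * th2 (u / (2 * (r : ℂ))) (τ / 2) /
    (th2 0 (τ / 2) * th2 ((1 + u) / (2 * (r : ℂ))) (τ / 2))

/-- Eight-vertex weight `b̄(u)`. -/
def bw (τ : ℂ) (r : ℝ) (u : ℂ) : ℂ :=
  th2 (1 / (2 * (r : ℂ))) (τ / 2) * th1 (u / (2 * (r : ℂ))) (τ / 2) /
    (th2 0 (τ / 2) * th1 ((1 + u) / (2 * (r : ℂ))) (τ / 2))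

/-- Eight-vertex weight `c̄(u)`. -/
def cw (τ : ℂ) (r : ℝ) (u : ℂ) : ℂ :=
  th1 (1 / (2 * (r : ℂ))) (τ / 2) * th2 (u / (2 * (r : ℂ))) (τ / 2) /
    (th2 0 (τ / 2) * th1 ((1 + u) / (2 * (r : ℂ))) (τ / 2))

/-- Eight-vertex weight `d̄(u)`. -/
def dw (τ : ℂ) (r : ℝ) (u : ℂ) : ℂ :=
  -(th1 (1 / (2 * (r : ℂ))) (τ / 2) * th1 (u / (2 * (r : ℂ))) (τ / 2)) /
    (th2 0 (τ / 2) * th2 ((1 + u) / (2 * (r : ℂ))) (τ / 2))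

/-- The normalized eight-vertex `R`-matrix entry `R̄(u)_{(ε₁,ε₂),(ε₁',ε₂')}`. -/
def Rbar (τ : ℂ) (r : ℝ) (u : ℂ) (e1 e2 e1' e2' : ℤ) : ℂ :=
  if e1' = e1 ∧ e2' = e2 ∧ e1 = e2 then aw τ r u
  else if e1' = e1 ∧ e2' = e2 ∧ e1 = -e2 then bw τ r u
  else if e1' = e2 ∧ e2' = e1 ∧ e1 = -e2 then cw τ r u
  else if e1' = -e1 ∧ e2' = -e2 ∧ e1 = e2 then dw τ r u
  else 0

/-- Sklyanin standard-basis vector `v_+(z)`. -/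
def vp (τ z : ℂ) : ℂ := th3 (2 * z) (2 * τ) - th2 (2 * z) (2 * τ)

/-- Sklyanin standard-basis vector `v_-(z)`. -/
def vm (τ z : ℂ) : ℂ := th3 (2 * z) (2 * τ) + th2 (2 * z) (2 * τ)


section aux
open Filter Topology

/-- shifted factorial -/
def sf (H : ℂ → ℂ) (u : ℂ) (n : ℕ) : ℂ := ∏ j ∈ Finset.range n, H (u + (j : ℂ))

lemma sf_succ (H : ℂ → ℂ) (u : ℂ) (n : ℕ) : sf H u (n+1) = sf H u n * H (u + n) := by
  simp [sf, Finset.prod_range_succ]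
lemma sf_succ' (H : ℂ → ℂ) (u : ℂ) (n : ℕ) : sf H u (n+1) = H u * sf H (u+1) n := by
  simp only [sf, Finset.prod_range_succ', Nat.cast_zero, add_zero]
  rw [mul_comm]
  congr 1
  apply Finset.prod_congr rfl
  intro j _
  congr 1
  push_cast; ring
lemma sf_zero (H : ℂ → ℂ) (u : ℂ) : sf H u 0 = 1 := by simp [sf]

/-- coefficient with indices `n` and `l = k - n` -/
def DD (H : ℂ → ℂ) (α β γ : ℂ) (n l : ℕ) : ℂ :=
  sf H 1 (n+l) / (sf H 1 n * sf H 1 l) *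
    (sf H (α - γ) n * sf H (α + γ + l) n * sf H (α - β) l * sf H (α + β + n) l) /
    (sf H (β - γ - l) n * sf H (γ - β - n) l * sf H (β + γ) (n+l))

lemma DD_zero (H : ℂ → ℂ) (α β γ : ℂ) (l : ℕ)
    (n1 : sf H 1 (l+1) ≠ 0) (n2 : sf H (γ - β) (l+1) ≠ 0)
    (n3 : sf H (β + γ) (l+1) ≠ 0) :
    DD H α β γ 0 (l+1) = DD H α β γ 0 l *
      ((H (α - β + l) * H (α + β + l)) / (H (γ - β + l) * H (β + γ + l))) := by
  simp only [DD, sf_zero, zero_add, Nat.cast_zero, sub_zero, add_zero, sf_succ] at *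
  have h1 := mul_ne_zero_iff.1 n1
  have h2 := mul_ne_zero_iff.1 n2
  have h3 := mul_ne_zero_iff.1 n3
  obtain ⟨h1, h1'⟩ := h1
  obtain ⟨h2, h2'⟩ := h2
  obtain ⟨h3, h3'⟩ := h3
  field_simp

lemma DD_zero' (H : ℂ → ℂ) (α β γ : ℂ) (l : ℕ)
    (n1 : sf H 1 (l+1) ≠ 0) (n2 : sf H (β - γ) (l+1) ≠ 0)
    (n3 : sf H (β + γ) (l+1) ≠ 0) :
    DD H α β γ (l+1) 0 = DD H α β γ l 0 *
      ((H (α - γ + l) * H (α + γ + l)) / (H (β - γ + l) * H (β + γ + l))) := by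
  simp only [DD, sf_zero, zero_add, Nat.cast_zero, sub_zero, add_zero, sf_succ] at *
  have h1 := mul_ne_zero_iff.1 n1
  have h2 := mul_ne_zero_iff.1 n2
  have h3 := mul_ne_zero_iff.1 n3
  obtain ⟨h1, h1'⟩ := h1
  obtain ⟨h2, h2'⟩ := h2
  obtain ⟨h3, h3'⟩ := h3
  field_simp

set_option maxHeartbeats 1000000 in
lemma DD_step (H : ℂ → ℂ) (hodd : ∀ u, H (-u) = - H u)
    (h3t : ∀ x y z w, H (x+z) * H (x-z) * (H (y+w) * H (y-w)) - H (x+w) * H (x-w) * (H (y+z) * H (y-z))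
      = H (x+y) * H (x-y) * (H (z+w) * H (z-w))) (α β γ : ℂ) (m l : ℕ)
    (n1 : ∀ j : ℕ, j < m + l + 2 → H (1 + j) ≠ 0)
    (n2 : ∀ j : ℕ, j < m + l + 2 → H (β - γ + j) ≠ 0)
    (n2' : ∀ j : ℕ, j < m + l + 2 → H (γ - β + j) ≠ 0)
    (n3 : ∀ j : ℕ, j < m + l + 2 → H (β + γ + j) ≠ 0) :
    DD H α β γ (m+1) (l+1) = DD H α β γ m (l+1) *
      ((H (α - γ + m) * H (α + γ + m + 2 * (l+1))) / (H (β - γ + m - (l+1)) * H (β + γ + (m+l+1)))) +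
      DD H α β γ (m+1) l *
      ((H (α - β + l) * H (α + β + l + 2 * (m+1))) / (H (γ - β + l - (m+1)) * H (β + γ + (m+l+1)))) := by
  have a0 : H (m + 1) ≠ 0 := by have := n1 m (by omega); rwa [add_comm] at this
  have a1 : H (l + 1) ≠ 0 := by have := n1 l (by omega); rwa [add_comm] at this
  have sfnz : ∀ (u : ℂ) (n : ℕ), (∀ j : ℕ, j < n → H (u + j) ≠ 0) → sf H u n ≠ 0 := by
    intro u n h
    exact Finset.prod_ne_zero_iff.2 fun j hj => h j (Finset.mem_range.1 hj)
  have nz : ∀ j : ℤ, -((m:ℤ) + l + 2) < j → j < m + l + 2 → H (β - γ + j) ≠ 0 := by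
    intro j hj1 hj2
    rcases le_total 0 j with h | h
    · lift j to ℕ using h
      exact_mod_cast n2 j (by omega)
    · have h' := n2' (-j).toNat (by omega)
      have hc : (((-j).toNat : ℕ) : ℂ) = -(j : ℂ) := by
        have : (((-j).toNat : ℕ) : ℤ) = -j := by omega
        exact_mod_cast congrArg (Int.cast : ℤ → ℂ) this
      rw [hc] at h'
      intro h0
      apply h'
      rw [← neg_eq_zero, ← hodd, ← h0]
      congr 1; ring
  have nz' : ∀ j : ℤ, -((m:ℤ) + l + 2) < j → j < m + l + 2 → H (γ - β + j) ≠ 0 := by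
    intro j hj1 hj2 h0
    refine nz (-j) (by omega) (by omega) ?_
    rw [← neg_eq_zero, ← hodd, ← h0]
    congr 1; push_cast; ring
  have b1 : sf H 1 m ≠ 0 := sfnz _ _ fun j hj => n1 j (by omega)
  have b2 : sf H 1 l ≠ 0 := sfnz _ _ fun j hj => n1 j (by omega)
  have b3 : sf H (β + γ) (m+l+1) ≠ 0 := sfnz _ _ fun j hj => n3 j (by omega)
  have b4 : H (β + γ + (m+l+1)) ≠ 0 := by
    have := n3 (m+l+1) (by omega)
    push_cast at this; exact this
  have c1 : H (β-γ - (l+1)) ≠ 0 := by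
    have := nz (-(l+1)) (by omega) (by omega)
    push_cast at this; rwa [← sub_eq_add_neg] at this
  have c2 : H (γ-β - (m+1)) ≠ 0 := by
    have := nz' (-(m+1)) (by omega) (by omega)
    push_cast at this; rwa [← sub_eq_add_neg] at this
  have c3 : H (β-γ+m-l) ≠ 0 := by
    have := nz (m-l) (by omega) (by omega)
    push_cast at this; rwa [← add_sub_assoc] at this
  have c4 : H (γ-β+l-m) ≠ 0 := by
    have := nz' (l-m) (by omega) (by omega)
    push_cast at this; rwa [← add_sub_assoc] at this
  have c5 : H (β-γ+m-(l+1)) ≠ 0 := by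
    have := nz (m-(l+1)) (by omega) (by omega)
    push_cast at this; rwa [← add_sub_assoc] at this
  have c6 : H (γ-β+l-(m+1)) ≠ 0 := by
    have := nz' (l-(m+1)) (by omega) (by omega)
    push_cast at this; rwa [← add_sub_assoc] at this
  have d1 : sf H (β-γ-l) m ≠ 0 := sfnz _ _ fun j hj => by
    have := nz (-l+j) (by omega) (by omega)
    push_cast at this; convert this using 2; ring
  have d2 : sf H (γ-β-m) l ≠ 0 := sfnz _ _ fun j hj => by
    have := nz' (-m+j) (by omega) (by omega)
    push_cast at this; convert this using 2; ring
  have d3 : sf H (β-γ-(l+1)) m ≠ 0 := sfnz _ _ fun j hj => by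
    have := nz (-(l+1)+j) (by omega) (by omega)
    push_cast at this; convert this using 2; ring
  have d4 : sf H (γ-β-(m+1)) l ≠ 0 := sfnz _ _ fun j hj => by
    have := nz' (-(m+1)+j) (by omega) (by omega)
    push_cast at this; convert this using 2; ring
  have q1 : ∀ n : ℕ, sf H 1 (n+1) = sf H 1 n * H (n+1) := fun n => by rw [sf_succ, add_comm (1:ℂ)]
  have q2 : sf H (β-γ-(l+1)) (m+1) = H (β-γ-(l+1)) * sf H (β-γ-l) m := by
    rw [sf_succ']; congr 2; ring
  have q2' : sf H (β-γ-(l+1)) (m+1) = sf H (β-γ-(l+1)) m * H (β-γ+m-(l+1)) := by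
    rw [sf_succ]; congr 2; ring
  have q3 : sf H (γ-β-(m+1)) (l+1) = H (γ-β-(m+1)) * sf H (γ-β-m) l := by
    rw [sf_succ']; congr 2; ring
  have q3' : sf H (γ-β-(m+1)) (l+1) = sf H (γ-β-(m+1)) l * H (γ-β+l-(m+1)) := by
    rw [sf_succ]; congr 2; ring
  have q4 : sf H (γ-β-m) (l+1) = sf H (γ-β-m) l * H (γ-β+l-m) := by
    rw [sf_succ]; congr 2; ring
  have q5 : sf H (β-γ-l) (m+1) = sf H (β-γ-l) m * H (β-γ+m-l) := by
    rw [sf_succ]; congr 2; ring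
  have q6 : sf H (α+γ+(l+1)) (m+1) = sf H (α+γ+l+1) m * H (α+γ+m+l+1) := by
    rw [sf_succ]; congr 2 <;> ring
  have q7 : sf H (α+β+(m+1)) (l+1) = sf H (α+β+m+1) l * H (α+β+m+l+1) := by
    rw [sf_succ]; congr 2 <;> ring
  have q8 : sf H (α+β+m) (l+1) = H (α+β+m) * sf H (α+β+m+1) l := by
    rw [sf_succ']
  have q9 : sf H (α+γ+l) (m+1) = H (α+γ+l) * sf H (α+γ+l+1) m := by
    rw [sf_succ']
  have q10 : sf H (α+γ+(l+1)) m = sf H (α+γ+l+1) m := by congr 1; ring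
  have q11 : sf H (α+β+(m+1)) l = sf H (α+β+m+1) l := by congr 1; ring
  have q12 : sf H 1 (m+1+(l+1)) = sf H 1 (m+l+1) * H (m+l+2) := by
    rw [show m+1+(l+1) = (m+l+1)+1 by ring, q1]; congr 2; push_cast; ring
  have q13 : sf H (β+γ) (m+1+(l+1)) = sf H (β+γ) (m+l+1) * H (β+γ+(m+l+1)) := by
    rw [show m+1+(l+1) = (m+l+1)+1 by ring, sf_succ]; push_cast; rfl
  have q14 : sf H (β-γ-(l+1)) m = H (β-γ-(l+1)) * sf H (β-γ-l) m / H (β-γ+m-(l+1)) := by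
    rw [← q2, q2']; field_simp
  have q15 : sf H (γ-β-(m+1)) l = H (γ-β-(m+1)) * sf H (γ-β-m) l / H (γ-β+l-(m+1)) := by
    rw [← q3, q3']; field_simp
  have e1 : DD H α β γ (m+1) (l+1) =
    (sf H 1 (m+l+1) * sf H (α-γ) m * sf H (α + γ + l + 1) m * sf H (α-β) l * sf H (α+β+m+1) l *
      H (α - γ + m) * H (α - β + l) /
     (sf H 1 m * sf H 1 l * H (m + 1) * H (l+1) * sf H (β-γ-l) m * sf H (γ-β-m) l *
      sf H (β + γ) (m+l+1) * H (β + γ + (m+l+1)) * H (β-γ - (l+1)) * H (γ - β -(m+1)))) *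
     (H (m+l+2) * H (α+γ+m+l+1) * H (α+β+m+l+1)) := by
    rw [DD, q12, q13, q1 m, q1 l]
    push_cast
    rw [q2, q3, q6, q7, sf_succ H (α - γ), sf_succ H (α - β)]
    clear n1 n2 n2' n3 h3t hodd nz nz' sfnz d3 d4 q1 q2 q2' q3 q3' q4 q5 q6 q7 q8 q9 q10 q11 q12 q13 q14 q15
    generalize sf H 1 (m+l+1) = v0
    generalize sf H (α-γ) m = v1
    generalize sf H (α + γ + l + 1) m = v2
    generalize sf H (α-β) l = v3
    generalize sf H (α+β+m+1) l = v4
    generalize H (α - γ + m) = v5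
    generalize H (α - β + l) = v6
    generalize sf H 1 m = v7 at b1 ⊢
    generalize sf H 1 l = v8 at b2 ⊢
    generalize H (m + 1 : ℂ) = v9 at a0 ⊢
    generalize H (l+1 : ℂ) = v10 at a1 ⊢
    generalize sf H (β-γ-l) m = v11 at d1 ⊢
    generalize sf H (γ-β-m) l = v12 at d2 ⊢
    generalize sf H (β + γ) (m+l+1) = v13 at b3 ⊢
    generalize H (β + γ + (m+l+1)) = v14 at b4 ⊢
    generalize H (β-γ - (l+1)) = v15 at c1 ⊢
    generalize H (γ - β -(m+1)) = v16 at c2 ⊢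
    generalize H (m+l+2 : ℂ) = v17
    generalize H (α+γ+m+l+1) = v18
    generalize H (α+β+m+l+1) = v19
    generalize H (α + γ + m + 2 * (l+1)) = v20
    generalize H (α+β+m) = v21
    generalize H (γ-β+l-m) = v22 at c4 ⊢
    generalize H (α + β + l + 2 * (m+1)) = v23
    generalize H (α+γ+l) = v24
    generalize H (β-γ+m-l) = v25 at c3 ⊢
    generalize H (β - γ + m - (l+1)) = v26 at c5 ⊢
    generalize H (γ - β + l - (m+1)) = v27 at c6 ⊢
    field_simp
  have e2 : DD H α β γ m (l+1) *
      ((H (α - γ + m) * H (α + γ + m + 2 * (l+1))) / (H (β - γ + m - (l+1)) * H (β + γ + (m+l+1)))) =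
    (sf H 1 (m+l+1) * sf H (α-γ) m * sf H (α + γ + l + 1) m * sf H (α-β) l * sf H (α+β+m+1) l *
      H (α - γ + m) * H (α - β + l) /
     (sf H 1 m * sf H 1 l * H (m + 1) * H (l+1) * sf H (β-γ-l) m * sf H (γ-β-m) l *
      sf H (β + γ) (m+l+1) * H (β + γ + (m+l+1)) * H (β-γ - (l+1)) * H (γ - β -(m+1)))) *
     (H (m + 1) * H (α + γ + m + 2 * (l+1)) * H (α+β+m) * H (γ - β - (m+1)) / H (γ-β+l-m)) := by
    rw [DD, ← add_assoc, q1 l]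
    push_cast
    rw [q14, q10, q4, q8, sf_succ H (α - β)]
    clear e1 n1 n2 n2' n3 h3t hodd nz nz' sfnz d3 d4 q1 q2 q2' q3 q3' q4 q5 q6 q7 q8 q9 q10 q11 q12 q13 q14 q15
    generalize sf H 1 (m+l+1) = v0
    generalize sf H (α-γ) m = v1
    generalize sf H (α + γ + l + 1) m = v2
    generalize sf H (α-β) l = v3
    generalize sf H (α+β+m+1) l = v4
    generalize H (α - γ + m) = v5
    generalize H (α - β + l) = v6
    generalize sf H 1 m = v7 at b1 ⊢
    generalize sf H 1 l = v8 at b2 ⊢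
    generalize H (m + 1 : ℂ) = v9 at a0 ⊢
    generalize H (l+1 : ℂ) = v10 at a1 ⊢
    generalize sf H (β-γ-l) m = v11 at d1 ⊢
    generalize sf H (γ-β-m) l = v12 at d2 ⊢
    generalize sf H (β + γ) (m+l+1) = v13 at b3 ⊢
    generalize H (β + γ + (m+l+1)) = v14 at b4 ⊢
    generalize H (β-γ - (l+1)) = v15 at c1 ⊢
    generalize H (γ - β -(m+1)) = v16 at c2 ⊢
    generalize H (m+l+2 : ℂ) = v17
    generalize H (α+γ+m+l+1) = v18
    generalize H (α+β+m+l+1) = v19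
    generalize H (α + γ + m + 2 * (l+1)) = v20
    generalize H (α+β+m) = v21
    generalize H (γ-β+l-m) = v22 at c4 ⊢
    generalize H (α + β + l + 2 * (m+1)) = v23
    generalize H (α+γ+l) = v24
    generalize H (β-γ+m-l) = v25 at c3 ⊢
    generalize H (β - γ + m - (l+1)) = v26 at c5 ⊢
    generalize H (γ - β + l - (m+1)) = v27 at c6 ⊢
    field_simp
  have e3 : DD H α β γ (m+1) l *
      ((H (α - β + l) * H (α + β + l + 2 * (m+1))) / (H (γ - β + l - (m+1)) * H (β + γ + (m+l+1)))) =
    (sf H 1 (m+l+1) * sf H (α-γ) m * sf H (α + γ + l + 1) m * sf H (α-β) l * sf H (α+β+m+1) l *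
      H (α - γ + m) * H (α - β + l) /
     (sf H 1 m * sf H 1 l * H (m + 1) * H (l+1) * sf H (β-γ-l) m * sf H (γ-β-m) l *
      sf H (β + γ) (m+l+1) * H (β + γ + (m+l+1)) * H (β-γ - (l+1)) * H (γ - β -(m+1)))) *
     (H (l + 1) * H (α + β + l + 2 * (m+1)) * H (α+γ+l) * H (β-γ - (l+1)) / H (β-γ+m-l)) := by
    rw [DD, show m+1+l = m+l+1 by ring, q1 m]
    push_cast
    rw [q15, q11, q5, q9, sf_succ H (α - γ)]
    clear e1 e2 n1 n2 n2' n3 h3t hodd nz nz' sfnz d3 d4 q1 q2 q2' q3 q3' q4 q5 q6 q7 q8 q9 q10 q11 q12 q13 q14 q15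
    generalize sf H 1 (m+l+1) = v0
    generalize sf H (α-γ) m = v1
    generalize sf H (α + γ + l + 1) m = v2
    generalize sf H (α-β) l = v3
    generalize sf H (α+β+m+1) l = v4
    generalize H (α - γ + m) = v5
    generalize H (α - β + l) = v6
    generalize sf H 1 m = v7 at b1 ⊢
    generalize sf H 1 l = v8 at b2 ⊢
    generalize H (m + 1 : ℂ) = v9 at a0 ⊢
    generalize H (l+1 : ℂ) = v10 at a1 ⊢
    generalize sf H (β-γ-l) m = v11 at d1 ⊢
    generalize sf H (γ-β-m) l = v12 at d2 ⊢
    generalize sf H (β + γ) (m+l+1) = v13 at b3 ⊢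
    generalize H (β + γ + (m+l+1)) = v14 at b4 ⊢
    generalize H (β-γ - (l+1)) = v15 at c1 ⊢
    generalize H (γ - β -(m+1)) = v16 at c2 ⊢
    generalize H (m+l+2 : ℂ) = v17
    generalize H (α+γ+m+l+1) = v18
    generalize H (α+β+m+l+1) = v19
    generalize H (α + γ + m + 2 * (l+1)) = v20
    generalize H (α+β+m) = v21
    generalize H (γ-β+l-m) = v22 at c4 ⊢
    generalize H (α + β + l + 2 * (m+1)) = v23
    generalize H (α+γ+l) = v24
    generalize H (β-γ+m-l) = v25 at c3 ⊢
    generalize H (β - γ + m - (l+1)) = v26 at c5 ⊢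
    generalize H (γ - β + l - (m+1)) = v27 at c6 ⊢
    field_simp
  rw [e1, e2, e3, ← mul_add]
  congr 1
  have ho : H (γ-β+l-m) = - H (β-γ+m-l) := by rw [← hodd]; congr 1; ring
  have ho2 : H (γ-β-(m+1)) = - H (β-γ+m+1) := by rw [← hodd]; congr 1; ring
  have ho3 : H (β-γ-(l+1)) = - H (γ-β+l+1) := by rw [← hodd]; congr 1; ring
  rw [ho, ho2, ho3]
  field_simp
  have := h3t ((α+γ+2*(m+l+1)+1)/2) ((α+2*β-γ+2*m+1)/2) ((α+γ+2*l+1)/2) ((α+γ-1)/2)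
  ring_nf at this ⊢
  linear_combination -this

lemma sum_shift (F G1 G2 : ℕ → ℕ → ℂ) (k : ℕ) (h0 : F 0 (k+1) = G2 0 k) (h1 : F (k+1) 0 = G1 k 0)
    (hs : ∀ m l, m + l + 1 = k → F (m+1) (l+1) = G1 m (l+1) + G2 (m+1) l) :
    ∑ n ∈ Finset.range (k+2), F n (k+1-n) =
      ∑ n ∈ Finset.range (k+1), (G1 n (k-n) + G2 n (k-n)) := by
  rw [Finset.sum_add_distrib, Finset.sum_range_succ' _ (k+1), Finset.sum_range_succ _ k,
    Finset.sum_range_succ _ k, Finset.sum_range_succ' _ k]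
  have : ∑ x ∈ Finset.range k, F (x+1) (k+1-(x+1)) =
      ∑ x ∈ Finset.range k, G1 x (k-x) + ∑ x ∈ Finset.range k, G2 (x+1) (k-(x+1)) := by
    rw [← Finset.sum_add_distrib]
    apply Finset.sum_congr rfl
    intro x hx
    have hx := Finset.mem_range.1 hx
    obtain ⟨l, rfl⟩ : ∃ l, k = x + l + 1 := ⟨k - x - 1, by omega⟩
    rw [show x + l + 1 + 1 - (x+1) = l+1 by omega, show x + l + 1 - x = l+1 by omega,
      show x + l + 1 - (x+1) = l by omega]
    exact hs x l rfl
  simp only [Nat.sub_zero, Nat.sub_self] at this ⊢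
  rw [this, h0, h1]
  ring

theorem binom (H : ℂ → ℂ) (hodd : ∀ u, H (-u) = - H u)
    (h3t : ∀ x y z w, H (x+z) * H (x-z) * (H (y+w) * H (y-w)) - H (x+w) * H (x-w) * (H (y+z) * H (y-z))
      = H (x+y) * H (x-y) * (H (z+w) * H (z-w))) (α β γ z : ℂ) (k : ℕ)
    (n1 : ∀ j : ℕ, j < k → H (1 + j) ≠ 0)
    (n2 : ∀ j : ℕ, j < k → H (β - γ + j) ≠ 0)
    (n2' : ∀ j : ℕ, j < k → H (γ - β + j) ≠ 0)
    (n3 : ∀ j : ℕ, j < k → H (β + γ + j) ≠ 0) :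
    sf H (α + z) k * sf H (α - z) k = ∑ n ∈ Finset.range (k+1),
      DD H α β γ n (k-n) * (sf H (β + z) n * sf H (β - z) n * sf H (γ + z) (k-n) * sf H (γ - z) (k-n)) := by
  induction k with
  | zero => simp [DD, sf_zero]
  | succ k ih =>
    have sfnz : ∀ (u : ℂ) (n : ℕ), (∀ j : ℕ, j < n → H (u + j) ≠ 0) → sf H u n ≠ 0 := by
      intro u n h
      exact Finset.prod_ne_zero_iff.2 fun j hj => h j (Finset.mem_range.1 hj)
    have ih := ih (fun j hj => n1 j (by omega)) (fun j hj => n2 j (by omega))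
      (fun j hj => n2' j (by omega)) (fun j hj => n3 j (by omega))
    set A : ℕ → ℕ → ℂ := fun n l => (H (α - γ + n) * H (α + γ + n + 2 * l)) /
      (H (β - γ + n - l) * H (β + γ + (n + l))) with hA
    set B : ℕ → ℕ → ℂ := fun n l => (H (α - β + l) * H (α + β + l + 2 * n)) /
      (H (γ - β + l - n) * H (β + γ + (n + l))) with hB
    set P : ℕ → ℕ → ℂ := fun n l =>
      sf H (β + z) n * sf H (β - z) n * sf H (γ + z) l * sf H (γ - z) l with hP
    have key := sum_shift (fun n l => DD H α β γ n l * P n l)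
      (fun n l => DD H α β γ n l * A n l * P (n+1) l)
      (fun n l => DD H α β γ n l * B n l * P n (l+1)) k ?_ ?_ ?_
    · rw [show k + 1 + 1 = k + 2 by ring, key, sf_succ, sf_succ]
      rw [show sf H (α + z) k * H (α + z + k) * (sf H (α - z) k * H (α - z + k)) =
        (sf H (α + z) k * sf H (α - z) k) * (H (α + z + k) * H (α - z + k)) by ring, ih,
        Finset.sum_mul]
      apply Finset.sum_congr rfl
      intro n hn
      have hn := Finset.mem_range.1 hn
      obtain ⟨l, rfl⟩ : ∃ l, k = n + l := ⟨k - n, by omega⟩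
      rw [show n + l - n = l by omega]
      have hk : H (α + z + (n + l : ℕ)) * H (α - z + (n + l : ℕ)) =
          A n l * (H (β + z + n) * H (β - z + n)) + B n l * (H (γ + z + l) * H (γ - z + l)) := by
        have ho : H (γ-β+l-n) = - H (β-γ+n-l) := by rw [← hodd]; congr 1; ring
        have ho2 : H (z - (γ + l)) = - H (γ - z + l) := by rw [← hodd]; congr 1; ring
        have z1 : H (β + γ + (n + l)) ≠ 0 := by
          have := n3 (n+l) (by omega)
          push_cast at this; exact this
        have z2 : H (β - γ + n - l) ≠ 0 := by
          rcases le_total l n with h | h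
          · have := n2 (n-l) (by omega)
            rw [Nat.cast_sub h] at this
            convert this using 2; ring
          · have := n2' (l-n) (by omega)
            rw [Nat.cast_sub h] at this
            intro h0
            rw [h0, neg_zero] at ho
            apply this
            rw [← ho]; congr 1; ring
        have t := h3t (α + (n + l)) (β + n) z (γ + l)
        rw [ho2] at t
        rw [hA, hB]
        simp only
        rw [ho]
        push_cast
        rw [show α + (n + l) + z = α + z + (n+l) by ring,
          show α + (n + l : ℂ) - z = α - z + (n+l) by ring,
          show β + (n:ℂ) + (γ + l) = β + γ + (n + l) by ring,
          show β + (n:ℂ) - (γ + l) = β - γ + n - l by ring,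
          show α + (n + l:ℂ) + (γ + l) = α + γ + n + 2 * l by ring,
          show α + (n + l:ℂ) - (γ + l) = α - γ + n by ring,
          show α + (n + l:ℂ) + (β + n) = α + β + l + 2 * n by ring,
          show α + (n + l:ℂ) - (β + n) = α - β + l by ring,
          show β + (n:ℂ) + z = β + z + n by ring,
          show β + (n:ℂ) - z = β - z + n by ring,
          show z + (γ + (l:ℂ)) = γ + z + l by ring] at t
        generalize H (β + γ + (n + l)) = v1 at *
        generalize H (β - γ + n - l) = v2 at *
        generalize H (α + γ + n + 2 * l) = v3 at *
        generalize H (α + β + l + 2 * n) = v4 at *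
        field_simp
        linear_combination t
      rw [hk]
      simp only [hP, sf_succ]
      ring
    · have := DD_zero H α β γ k (sfnz _ _ n1) (sfnz _ _ n2') (sfnz _ _ n3)
      simp only [this, hB]
      simp
    · have := DD_zero' H α β γ k (sfnz _ _ n1) (sfnz _ _ n2) (sfnz _ _ n3)
      simp only [this, hA]
      simp
    · intro m l hml
      subst hml
      have := DD_step H hodd h3t α β γ m l n1 n2 n2' n3
      simp only [this, hA, hB]
      push_cast
      rw [show (m : ℂ) + (l+1) = m + l + 1 by ring, show (m : ℂ) + 1 + l = m + l + 1 by ring]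
      ring
/-- `(p;p)_N` -/
def QQ (p : ℂ) (N : ℕ) : ℂ := ∏ j ∈ Finset.range N, (1 - p ^ (j+1))

/-- `1/(p;p)_m`, extended by zero to negative `m` -/
def iQ (p : ℂ) (m : ℤ) : ℂ := if m < 0 then 0 else (QQ p m.toNat)⁻¹

lemma one_sub_pow_ne (p : ℂ) (hp : ‖p‖ < 1) (j : ℕ) : 1 - p ^ (j+1) ≠ 0 := by
  intro h
  have h1 : p ^ (j+1) = 1 := by linear_combination -h
  have h2 : ‖p‖ ^ (j+1) = 1 := by rw [← norm_pow, h1, norm_one]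
  have h3 : ‖p‖ ^ (j+1) < 1 := pow_lt_one₀ (norm_nonneg _) hp (by omega)
  linarith

lemma iQ_rec (p : ℂ) (hp : ‖p‖ < 1) (m : ℤ) : iQ p (m - 1) = (1 - p ^ m) * iQ p m := by
  rcases lt_trichotomy m 0 with h | h | h
  · simp [iQ, h, show m - 1 < 0 by omega]
  · subst h; simp [iQ]
  · obtain ⟨j, rfl⟩ : ∃ j : ℕ, m = j + 1 := ⟨(m-1).toNat, by omega⟩
    have := one_sub_pow_ne p hp j
    have e : (((j:ℤ) + 1).toNat) = j + 1 := by omega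
    have e2 : (p ^ ((j:ℤ)+1)) = p ^ (j+1) := by exact_mod_cast zpow_natCast p (j+1)
    simp only [iQ, add_sub_cancel_right, e, e2, Int.toNat_natCast]
    rw [if_neg (by omega), if_neg (by omega), QQ, QQ, Finset.prod_range_succ, mul_inv]
    field_simp

lemma summable_pp (p : ℂ) (hp : ‖p‖ < 1) (c : ℂ) : Summable fun j : ℕ => ‖c * p ^ j‖ := by
  simp only [norm_mul, norm_pow]
  exact (summable_geometric_of_lt_one (norm_nonneg _) hp).mul_left _

lemma mult_pp (p : ℂ) (hp : ‖p‖ < 1) (c : ℂ) : Multipliable fun j : ℕ => 1 - c * p ^ j := by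
  have := multipliable_one_add_of_summable (summable_pp p hp (-c))
  convert this using 2; ring

lemma QQ_tendsto (p : ℂ) (hp : ‖p‖ < 1) : ∃ L : ℂ, L ≠ 0 ∧ Tendsto (QQ p) atTop (𝓝 L) := by
  have e : (fun j : ℕ => 1 - p ^ (j+1)) = fun j : ℕ => 1 + (-p) * p ^ j := by
    funext j; ring
  refine ⟨∏' j : ℕ, (1 - p ^ (j+1)), ?_, ?_⟩
  · rw [e]
    apply tprod_one_add_ne_zero_of_summable _ (summable_pp p hp _)
    intro j
    have := one_sub_pow_ne p hp j
    convert this using 1; ring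
  · have : Multipliable (fun j : ℕ => 1 - p ^ (j+1)) := by
      rw [e]; exact multipliable_one_add_of_summable (summable_pp p hp _)
    exact this.hasProd.tendsto_prod_nat

lemma iQ_tendsto (p : ℂ) (L : ℂ) (hL : L ≠ 0) (h : Tendsto (QQ p) atTop (𝓝 L)) :
    Tendsto (iQ p) atTop (𝓝 L⁻¹) := by
  have h1 : Tendsto (fun m : ℤ => m.toNat) atTop atTop := by
    apply tendsto_atTop.2
    intro b
    filter_upwards [eventually_ge_atTop (b : ℤ)] with m hm
    omega
  refine ((h.comp h1).inv₀ hL).congr' ?_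
  filter_upwards [eventually_ge_atTop (0 : ℤ)] with m hm
  simp [iQ, not_lt.2 hm]

lemma iQ_bdd (p : ℂ) (L : ℂ) (hL : L ≠ 0) (h : Tendsto (QQ p) atTop (𝓝 L)) :
    ∃ C : ℝ, ∀ m, ‖iQ p m‖ ≤ C := by
  obtain ⟨C, hC⟩ := ((h.inv₀ hL).norm).bddAbove_range
  refine ⟨C, fun m => ?_⟩
  have h0 : ∀ n, ‖(QQ p n)⁻¹‖ ≤ C := fun n => hC ⟨n, rfl⟩
  unfold iQ
  split_ifs
  · rw [norm_zero]; exact (norm_nonneg _).trans (h0 0)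
  · exact h0 _

lemma fin_triple (p z : ℂ) (hp : ‖p‖ < 1) (hp0 : p ≠ 0) (hz : z ≠ 0) (T : ℤ → ℂ) (hT0 : T 0 = 1)
    (hT : ∀ n, T (n+1) = - T n * p ^ n * z) (N : ℕ) :
    HasSum (fun n : ℤ => QQ p (2*N) * iQ p (N + n) * iQ p (N - n) * T n)
      (∏ j ∈ Finset.range N, ((1 - z * p ^ j) * (1 - p ^ (j + 1) / z))) := by
  induction N with
  | zero =>
    have := hasSum_single (f := fun n : ℤ => QQ p (2*0) * iQ p ((0:ℕ) + n) * iQ p ((0:ℕ) - n) * T n) 0 ?_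
    · convert this using 1
      simp [QQ, iQ, hT0]
    · intro n hn
      rcases lt_or_gt_of_ne hn with h | h
      · have : iQ p ((0:ℕ) + n) = 0 := by simp [iQ, h]
        rw [this]; ring
      · have : iQ p ((0:ℕ) - n) = 0 := by simp [iQ, h]
        rw [this]; ring
  | succ N ih =>
    have s1 := (Equiv.hasSum_iff (Equiv.subRight (1:ℤ))).2 ih
    have s2 := (Equiv.hasSum_iff (Equiv.addRight (1:ℤ))).2 ih
    have := ((ih.mul_left (1 + p^(2*N+1))).sub (s1.mul_left (z * p ^ N))).sub
      (s2.mul_left (p ^ (N+1) / z))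
    convert this using 1
    · rfl
    · funext n
      simp only [Function.comp, Equiv.subRight_apply, Equiv.coe_addRight]
      have t1 : T (n-1) = - T n * p * (p ^ n)⁻¹ / z := by
        have := hT (n-1)
        rw [sub_add_cancel, zpow_sub_one₀ hp0] at this
        rw [this]
        have := zpow_ne_zero n hp0
        field_simp
      have i1 : iQ p (N + n) = (1 - p ^ (N+1) * p ^ n) * iQ p ((N + 1 : ℕ) + n) := by
        rw [← zpow_natCast, ← zpow_add₀ hp0, ← iQ_rec p hp]; congr 1; push_cast; ring
      have i2 : iQ p (N - n) = (1 - p ^ (N+1) * (p ^ n)⁻¹) * iQ p ((N + 1 : ℕ) - n) := by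
        rw [← zpow_natCast, ← zpow_neg, ← zpow_add₀ hp0, ← sub_eq_add_neg, ← iQ_rec p hp]; congr 1; push_cast; ring
      have i3 : iQ p (N + (n - 1)) = (1 - p ^ N * p ^ n) * iQ p (N + n) := by
        rw [← zpow_natCast, ← zpow_add₀ hp0, ← iQ_rec p hp]; congr 1; ring
      have i4 : iQ p (N - (n + 1)) = (1 - p ^ N * (p ^ n)⁻¹) * iQ p (N - n) := by
        rw [← zpow_natCast, ← zpow_neg, ← zpow_add₀ hp0, ← sub_eq_add_neg, ← iQ_rec p hp]; congr 1; ring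
      have i5 : iQ p (N - (n - 1)) = iQ p ((N + 1 : ℕ) - n) := by
        congr 1; push_cast; ring
      have i6 : iQ p (N + (n + 1)) = iQ p ((N + 1 : ℕ) + n) := by
        congr 1; push_cast; ring
      have q : QQ p (2*(N+1)) = QQ p (2*N) * (1 - p^(2*N+1)) * (1 - p^(2*N+2)) := by
        rw [show 2*(N+1) = 2*N+1+1 by ring, QQ, QQ, Finset.prod_range_succ, Finset.prod_range_succ]
      rw [i3, i4, i5, i6, i1, i2, q, t1, hT n]
      have hu := zpow_ne_zero n hp0
      generalize p ^ n = u at *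
      generalize iQ p ((N + 1 : ℕ) + n) = A
      generalize iQ p ((N + 1 : ℕ) - n) = B
      generalize QQ p (2*N) = C
      rw [show p^(2*N+1) = p * (p^N)^2 by ring, show p^(2*N+2) = p^2 * (p^N)^2 by ring,
        show p^(N+1) = p * p^N by ring]
      generalize p ^ N = w
      field_simp
      ring
    · rw [Finset.prod_range_succ]
      field_simp
      ring

lemma triple (p z : ℂ) (hp : ‖p‖ < 1) (hp0 : p ≠ 0) (hz : z ≠ 0) (T : ℤ → ℂ) (hT0 : T 0 = 1)
    (hT : ∀ n, T (n+1) = - T n * p ^ n * z) (hs : Summable T) :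
    Theta p z = ∑' n, T n := by
  obtain ⟨L, hL, hQ⟩ := QQ_tendsto p hp
  have hiQ := iQ_tendsto p L hL hQ
  obtain ⟨C, hC⟩ := iQ_bdd p L hL hQ
  obtain ⟨D, hD⟩ := hQ.norm.bddAbove_range
  have hD : ∀ n, ‖QQ p n‖ ≤ D := fun n => hD ⟨n, rfl⟩
  have hD0 : 0 ≤ D := (norm_nonneg _).trans (hD 0)
  have hC0 : 0 ≤ C := (norm_nonneg _).trans (hC 0)
  have l1 : Tendsto (fun N : ℕ => ∑' n : ℤ, QQ p N * (QQ p (2*N) * iQ p (N + n) * iQ p (N - n) * T n))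
      atTop (𝓝 (∑' n, T n)) := by
    apply tendsto_tsum_of_dominated_convergence (bound := fun n => D * (D * C * C * ‖T n‖))
    · exact (hs.norm.mul_left _).mul_left _
    · intro n
      have h2 : Tendsto (fun N : ℕ => QQ p (2*N)) atTop (𝓝 L) :=
        hQ.comp (tendsto_id.const_mul_atTop' (by norm_num))
      have h3 : Tendsto (fun N : ℕ => iQ p (N + n)) atTop (𝓝 L⁻¹) :=
        hiQ.comp (tendsto_atTop_add_const_right _ _ tendsto_natCast_atTop_atTop)
      have h4 : Tendsto (fun N : ℕ => iQ p (N - n)) atTop (𝓝 L⁻¹) := by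
        simp only [sub_eq_add_neg]
        exact hiQ.comp (tendsto_atTop_add_const_right _ _ tendsto_natCast_atTop_atTop)
      have := hQ.mul (((h2.mul h3).mul h4).mul_const (T n))
      convert this using 2
      field_simp
    · refine Eventually.of_forall fun N n => ?_
      simp only [norm_mul]
      have := hD N; have := hD (2*N); have := hC (N+n); have := hC (N-n)
      gcongr
  have l2 : Tendsto (fun N : ℕ => ∏ j ∈ Finset.range N,
      ((1 - z * p ^ j) * (1 - p ^ (j + 1) / z) * (1 - p ^ (j + 1)))) atTop (𝓝 (Theta p z)) := by
    have m1 := mult_pp p hp z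
    have m2 := mult_pp p hp (p/z)
    have m3 := mult_pp p hp p
    have := ((m1.mul m2).mul m3)
    have e : (fun j : ℕ => (1 - z * p ^ j) * (1 - p / z * p ^ j) * (1 - p * p ^ j)) =
      fun j : ℕ => ((1 - z * p ^ j) * (1 - p ^ (j + 1) / z) * (1 - p ^ (j + 1))) := by
      funext j; rw [pow_succ]; ring
    rw [e] at this
    exact this.hasProd.tendsto_prod_nat
  refine tendsto_nhds_unique l2 (l1.congr fun N => ?_)
  rw [tsum_mul_left, (fin_triple p z hp hp0 hz T hT0 hT N).tsum_eq, Finset.prod_mul_distrib (g := fun j => 1 - p^(j+1)), mul_comm]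
  rfl

/-- one-variable building block -/
def BB (σ x : ℂ) : ℂ := ∑' a : ℤ, Complex.exp (Real.pi * Complex.I * σ * (2 * (a + x)^2))

/-- normalised theta function -/
def gg (σ w : ℂ) : ℂ := ∑' n : ℤ, Complex.exp (Real.pi * Complex.I * (n + σ * (n + w)^2))

lemma BB_summable (σ x : ℂ) (hσ : 0 < σ.im) :
    Summable fun a : ℤ => Complex.exp (Real.pi * Complex.I * σ * (2 * (a + x)^2)) := by
  have := ((summable_jacobiTheta₂_term_iff (2*x*σ) (2*σ)).2 (by simpa using hσ)).mul_left
    (Complex.exp (2 * Real.pi * Complex.I * σ * x^2))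
  refine this.congr fun a => ?_
  rw [jacobiTheta₂_term, ← Complex.exp_add]
  congr 1; ring

lemma gg_summable (σ w : ℂ) (hσ : 0 < σ.im) :
    Summable fun n : ℤ => Complex.exp (Real.pi * Complex.I * (n + σ * (n + w)^2)) := by
  have := ((summable_jacobiTheta₂_term_iff (σ*w+1/2) σ).2 hσ).mul_left
    (Complex.exp (Real.pi * Complex.I * σ * w^2))
  refine this.congr fun a => ?_
  rw [jacobiTheta₂_term, ← Complex.exp_add]
  congr 1; ring

lemma gg_odd (σ y : ℂ) : gg σ (-y - 1/2) = - gg σ (y - 1/2) := by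
  unfold gg
  rw [← (Equiv.subLeft (1:ℤ)).tsum_eq, ← tsum_neg]
  congr 1
  funext n
  have : -Complex.exp (Real.pi * Complex.I * (n + σ * (n + (y-1/2))^2)) =
      Complex.exp (Real.pi * Complex.I * (n + σ * (n + (y-1/2))^2) + Real.pi * Complex.I) := by
    rw [Complex.exp_add, Complex.exp_pi_mul_I]; ring
  rw [this, Complex.exp_eq_exp_iff_exists_int]
  refine ⟨-n, ?_⟩
  simp only [Equiv.subLeft_apply]
  push_cast
  ring

lemma hasSum_split (F : ℤ × ℤ → ℂ) (a b : ℂ)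
    (h1 : HasSum (fun q : ℤ × ℤ => F (q.1 + q.2 + 1, q.1 - q.2 + 1)) a)
    (h2 : HasSum (fun q : ℤ × ℤ => F (q.1 + q.2 + 1, q.1 - q.2)) b) : HasSum F (a + b) := by
  let f1 : ℤ × ℤ → ℤ × ℤ := fun q => (q.1 + q.2 + 1, q.1 - q.2 + 1)
  let f2 : ℤ × ℤ → ℤ × ℤ := fun q => (q.1 + q.2 + 1, q.1 - q.2)
  have i1 : Function.Injective f1 := by
    rintro ⟨a, b⟩ ⟨c, d⟩ h
    simp only [f1, Prod.mk.injEq] at h ⊢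
    omega
  have i2 : Function.Injective f2 := by
    rintro ⟨a, b⟩ ⟨c, d⟩ h
    simp only [f2, Prod.mk.injEq] at h ⊢
    omega
  have hc : IsCompl (Set.range f1) (Set.range f2) := by
    constructor
    · rw [Set.disjoint_iff]
      rintro _ ⟨⟨⟨a, b⟩, rfl⟩, ⟨⟨c, d⟩, h⟩⟩
      simp only [f1, f2, Prod.mk.injEq] at h
      omega
    · rw [codisjoint_iff_le_sup]
      rintro ⟨m, n⟩ -
      rcases Int.even_or_odd' (m + n) with ⟨k, h | h⟩
      · left
        refine ⟨(k - 1, m - k), ?_⟩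
        simp only [f1, Prod.mk.injEq]; omega
      · right
        refine ⟨(k, m - k - 1), ?_⟩
        simp only [f2, Prod.mk.injEq]; omega
  exact HasSum.add_isCompl hc ((i1.hasSum_range_iff (f := F)).2 h1) ((i2.hasSum_range_iff (f := F)).2 h2)

lemma hasSum_mulZ (f g : ℤ → ℂ) (hf : Summable f) (hg : Summable g) :
    HasSum (fun q : ℤ × ℤ => f q.1 * g q.2) ((∑' n, f n) * ∑' n, g n) := by
  have h := summable_mul_of_summable_norm hf.norm hg.norm
  rw [tsum_mul_tsum_of_summable_norm hf.norm hg.norm]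
  exact h.hasSum

lemma gg_mul (σ x z : ℂ) (hσ : 0 < σ.im) : gg σ (x + z - 1/2) * gg σ (x - z - 1/2) =
    BB σ (x + 1/2) * BB σ z - BB σ x * BB σ (z + 1/2) := by
  have hprod : HasSum (fun q : ℤ × ℤ =>
      Complex.exp (Real.pi * Complex.I * (q.1 + σ * (q.1 + (x+z-1/2))^2)) *
      Complex.exp (Real.pi * Complex.I * (q.2 + σ * (q.2 + (x-z-1/2))^2)))
      (gg σ (x + z - 1/2) * gg σ (x - z - 1/2)) :=
    hasSum_mulZ (fun n : ℤ => Complex.exp (Real.pi * Complex.I * (n + σ * (n + (x+z-1/2))^2)))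
      (fun n : ℤ => Complex.exp (Real.pi * Complex.I * (n + σ * (n + (x-z-1/2))^2)))
      (gg_summable σ (x+z-1/2) hσ) (gg_summable σ (x-z-1/2) hσ)
  have hBB : ∀ s t : ℂ, HasSum (fun q : ℤ × ℤ =>
      Complex.exp (Real.pi * Complex.I * σ * (2 * (q.1 + s)^2)) *
      Complex.exp (Real.pi * Complex.I * σ * (2 * (q.2 + t)^2)))
      (BB σ s * BB σ t) := fun s t =>
    hasSum_mulZ (fun n : ℤ => Complex.exp (Real.pi * Complex.I * σ * (2 * (n + s)^2)))
      (fun n : ℤ => Complex.exp (Real.pi * Complex.I * σ * (2 * (n + t)^2)))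
      (BB_summable σ s hσ) (BB_summable σ t hσ)
  have p1 := hBB (x+1/2) z
  have p2 := (hBB x (z+1/2)).neg
  have := hasSum_split (fun q : ℤ × ℤ =>
      Complex.exp (Real.pi * Complex.I * (q.1 + σ * (q.1 + (x+z-1/2))^2)) *
      Complex.exp (Real.pi * Complex.I * (q.2 + σ * (q.2 + (x-z-1/2))^2)))
    (BB σ (x + 1/2) * BB σ z) (-(BB σ x * BB σ (z + 1/2))) ?_ ?_
  · rw [sub_eq_add_neg]
    exact hprod.unique this
  · clear hprod p2
    refine Eq.subst (motive := fun f => HasSum f _) (funext ?_) p1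
    rintro ⟨a, b⟩
    simp only
    rw [← Complex.exp_add, ← Complex.exp_add, eq_comm, Complex.exp_eq_exp_iff_exists_int]
    refine ⟨a + 1, ?_⟩
    push_cast
    ring
  · clear hprod p1
    refine Eq.subst (motive := fun f => HasSum f _) (funext ?_) p2
    rintro ⟨a, b⟩
    simp only
    rw [← Complex.exp_add, ← Complex.exp_add]
    rw [← mul_neg_one, ← Complex.exp_pi_mul_I, ← Complex.exp_add, eq_comm,
      Complex.exp_eq_exp_iff_exists_int]
    refine ⟨a, ?_⟩
    push_cast
    ring

lemma br_eq (τ : ℂ) (r : ℝ) (hτ : 0 < τ.im) (hr : 0 < r) (u : ℂ) :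
    br τ r u = Complex.exp (Real.pi * Complex.I / τ / 4) * gg (-1/τ) (u / r - 1/2) := by
  have hτ0 : τ ≠ 0 := by rintro rfl; simp at hτ
  have hr0 : (r : ℂ) ≠ 0 := by exact_mod_cast hr.ne'
  have hσ : 0 < (-1/τ).im := by
    rw [neg_div, one_div, Complex.neg_im, Complex.inv_im, neg_div, neg_neg]
    exact div_pos hτ (Complex.normSq_pos.2 hτ0)
  have hp : xp τ r (2 * (r : ℂ)) = Complex.exp (2 * Real.pi * Complex.I * (-1/τ)) := by
    rw [xp]; congr 1; field_simp
  have hz : xp τ r (2 * u) = Complex.exp (2 * Real.pi * Complex.I * (-1/τ * (u / r))) := by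
    rw [xp]; congr 1; field_simp
  have hx : xp τ r (u ^ 2 / (r : ℂ) - u) =
      Complex.exp (Real.pi * Complex.I * (-1/τ) * ((u/r)^2 - u/r)) := by
    rw [xp]; congr 1; field_simp
  have hc : Complex.exp (Real.pi * Complex.I / τ / 4) =
      Complex.exp (- Real.pi * Complex.I * (-1/τ) / 4) := by
    congr 1; field_simp
  rw [br, hp, hz, hx, hc]
  generalize u / (r:ℂ) = y
  generalize -1/τ = σ at *
  rw [triple (T := fun n => jacobiTheta₂_term n (σ * y + 1/2 - σ/2) σ), gg, ← tsum_mul_left, ← tsum_mul_left]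
  · congr 1
    funext n
    rw [jacobiTheta₂_term, ← Complex.exp_add, ← Complex.exp_add]
    congr 1
    ring
  · rw [Complex.norm_exp, Real.exp_lt_one_iff]
    have : (2 * Real.pi * Complex.I * σ).re = - (2 * Real.pi * σ.im) := by simp
    rw [this]
    have := Real.pi_pos
    have : 0 < 2 * Real.pi * σ.im := by positivity
    linarith
  · exact Complex.exp_ne_zero _
  · exact Complex.exp_ne_zero _
  · simp [jacobiTheta₂_term]
  · intro n
    rw [jacobiTheta₂_term, jacobiTheta₂_term, ← mul_neg_one, ← Complex.exp_pi_mul_I, ← Complex.exp_int_mul,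
      ← Complex.exp_add, ← Complex.exp_add, ← Complex.exp_add]
    congr 1
    push_cast
    ring
  · exact (summable_jacobiTheta₂_term_iff _ _).2 hσ

lemma sig_im (τ : ℂ) (hτ : 0 < τ.im) : 0 < (-1/τ).im := by
  have hτ0 : τ ≠ 0 := by rintro rfl; simp at hτ
  rw [neg_div, one_div, Complex.neg_im, Complex.inv_im, neg_div, neg_neg]
  exact div_pos hτ (Complex.normSq_pos.2 hτ0)

lemma br_odd (τ : ℂ) (r : ℝ) (hτ : 0 < τ.im) (hr : 0 < r) (u : ℂ) : br τ r (-u) = - br τ r u := by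
  rw [br_eq τ r hτ hr, br_eq τ r hτ hr, neg_div (r:ℂ) u, gg_odd, mul_neg]

lemma br_three (τ : ℂ) (r : ℝ) (hτ : 0 < τ.im) (hr : 0 < r) (x y z w : ℂ) :
    br τ r (x+z) * br τ r (x-z) * (br τ r (y+w) * br τ r (y-w)) -
      br τ r (x+w) * br τ r (x-w) * (br τ r (y+z) * br τ r (y-z))
      = br τ r (x+y) * br τ r (x-y) * (br τ r (z+w) * br τ r (z-w)) := by
  have key : ∀ a b : ℂ, br τ r (a+b) * br τ r (a-b) =
      Complex.exp (Real.pi * Complex.I / τ / 4)^2 *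
      (BB (-1/τ) (a/r + 1/2) * BB (-1/τ) (b/r) - BB (-1/τ) (a/r) * BB (-1/τ) (b/r + 1/2)) := by
    intro a b
    rw [← gg_mul _ _ _ (sig_im τ hτ), br_eq τ r hτ hr, br_eq τ r hτ hr, add_div, sub_div]
    ring
  simp only [key]
  ring

end aux

/-- Elliptic binomial theorem. -/
theorem elliptic_binomial_theorem (τ : ℂ) (r : ℝ) (hτ : 0 < τ.im) (hr : 0 < r)
    (k : ℕ) (α β γ z : ℂ)
    (h1 : ∀ n ≤ k, brF τ r 1 n ≠ 0)
    (h2 : ∀ n ≤ k, brF τ r (β - γ + (n : ℂ) - (k : ℂ)) n ≠ 0)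
    (h3 : ∀ n ≤ k, brF τ r (γ - β - (n : ℂ)) (k - n) ≠ 0)
    (h4 : brF τ r (β + γ) k ≠ 0) :
    brF τ r (α + (r : ℂ) * z) k * brF τ r (α - (r : ℂ) * z) k =
      ∑ n ∈ Finset.range (k + 1),
        Cnk τ r k n α β γ *
          (brF τ r (β + (r : ℂ) * z) n * brF τ r (β - (r : ℂ) * z) n *
            brF τ r (γ + (r : ℂ) * z) (k - n) * brF τ r (γ - (r : ℂ) * z) (k - n)) := by
  have sfb : ∀ u n, brF τ r u n = sf (br τ r) u n := fun _ _ => rfl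
  have nzf : ∀ (u : ℂ) (n : ℕ), brF τ r u n ≠ 0 → ∀ j : ℕ, j < n → br τ r (u + j) ≠ 0 := by
    intro u n h j hj
    exact Finset.prod_ne_zero_iff.1 h j (Finset.mem_range.2 hj)
  have h2k := h2 k le_rfl
  rw [add_sub_cancel_right] at h2k
  have h30 := h3 0 (Nat.zero_le _)
  rw [Nat.cast_zero, sub_zero, Nat.sub_zero] at h30
  have main := binom (br τ r) (br_odd τ r hτ hr) (br_three τ r hτ hr) α β γ (r * z) k
    (nzf _ _ (h1 k le_rfl)) (nzf _ _ h2k) (nzf _ _ h30) (nzf _ _ h4)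
  simp only [sfb]
  rw [main]
  apply Finset.sum_congr rfl
  intro n hn
  have hn := Finset.mem_range.1 hn
  obtain ⟨l, rfl⟩ : ∃ l, k = n + l := ⟨k - n, by omega⟩
  rw [show n + l - n = l by omega]
  congr 1
  rw [DD, Cnk, show n + l - n = l by omega]
  simp only [sfb]
  rw [show α + γ + ((n + l : ℕ) : ℂ) - n = α + γ + l by push_cast; ring,
    show β - γ + (n : ℂ) - ((n + l : ℕ) : ℂ) = β - γ - l by push_cast; ring]

end Ell
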